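/- arXiv:cs/0205051 — 7 statements merged into one kernel-verified Lean document; each statement's English description precedes it below -/
import Mathlib

section
/- Let x_1, x_2 ≥ 0 with x_1 + x_2 < 1, and set a = (11/6)·(1 − x_1 − x_2). Then the limit of C_k(x_1, x_2) as k → ∞ exists and equals (F′(x_1) + F′(x_2))·(1 − e^{−a})/a − (F′(x_1)·F(x_2) + F′(x_2)·F(x_1))·(1 − (1 + a)·e^{−a})/a². -/
/-- The cumulative distribution function `F(z) = min((11/6)z, 1)` of the ICUT scheme. -/
noncomputable def Fcdf (z : ℝ) : ℝ := min ((11 / 6) * z) 1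

/-- The probability density `F′(z)`: `11/6` for `z < 6/11` and `0` for `z ≥ 6/11`. -/
noncomputable def Fpdf (z : ℝ) : ℝ := if z < 6 / 11 then 11 / 6 else 0

/-- The density `d_k(x)` with which ICUT cuts an infinitesimal `1,2`-aligned segment at
`x = (x_1, …, x_k)`:
`d_k(x) = (1/k!) ∑_σ [ F′(x_1) ∏_{i : σ(i) < σ(1)} (1 − F(x_i))
                      + F′(x_2) ∏_{i : σ(i) < σ(2)} (1 − F(x_i)) ]`. -/
noncomputable def dDensity (k : ℕ) (hk : 2 ≤ k) (x : Fin k → ℝ) : ℝ :=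
  ((Nat.factorial k : ℝ))⁻¹ *
    ∑ σ : Equiv.Perm (Fin k),
      (Fpdf (x ⟨0, by omega⟩) *
          ∏ i ∈ Finset.univ.filter (fun i => σ i < σ ⟨0, by omega⟩), (1 - Fcdf (x i)) +
        Fpdf (x ⟨1, by omega⟩) *
          ∏ i ∈ Finset.univ.filter (fun i => σ i < σ ⟨1, by omega⟩), (1 - Fcdf (x i)))

/-- `C_k(x_1, x_2) = d_k(x_1, x_2, c, …, c)` where `c = (1 − x_1 − x_2)/(k − 2)`. -/
noncomputable def Cdensity (k : ℕ) (hk : 3 ≤ k) (x1 x2 : ℝ) : ℝ :=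
  dDensity k (by omega)
    (fun i => if (i : ℕ) = 0 then x1 else if (i : ℕ) = 1 then x2
      else (1 - x1 - x2) / ((k : ℝ) - 2))

lemma perm_count {k : ℕ} (U : Finset (Fin k)) (j : Fin k) (hj : j ∈ U) :
    (Finset.univ.filter (fun σ : Equiv.Perm (Fin k) => ∀ i ∈ U, σ i ≤ σ j)).card * U.card
      = k.factorial := by
  have h1 : ∀ u ∈ U, (Finset.univ.filter (fun σ : Equiv.Perm (Fin k) => ∀ i ∈ U, σ i ≤ σ u)).card
      = (Finset.univ.filter (fun σ : Equiv.Perm (Fin k) => ∀ i ∈ U, σ i ≤ σ j)).card := by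
    intro u hu
    have hs : ∀ i ∈ U, Equiv.swap j u i ∈ U := by
      intro i hi
      rw [Equiv.swap_apply_def]
      split_ifs <;> assumption
    refine Finset.card_bij' (fun σ _ => σ * Equiv.swap j u) (fun σ _ => σ * Equiv.swap j u)
      ?_ ?_ ?_ ?_
    · intro σ hσ
      simp only [Finset.mem_filter, Finset.mem_univ, true_and] at hσ ⊢
      intro i hi
      simpa using hσ _ (hs i hi)
    · intro σ hσ
      simp only [Finset.mem_filter, Finset.mem_univ, true_and] at hσ ⊢
      intro i hi
      simpa using hσ _ (hs i hi)
    · intro σ _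
      simp [mul_assoc]
    · intro σ _
      simp [mul_assoc]
  have h2 : (Finset.univ : Finset (Equiv.Perm (Fin k))) =
      U.biUnion (fun u => Finset.univ.filter (fun σ : Equiv.Perm (Fin k) => ∀ i ∈ U, σ i ≤ σ u)) := by
    ext σ
    simp only [Finset.mem_univ, Finset.mem_biUnion, Finset.mem_filter, true_and, true_iff]
    exact Finset.exists_max_image U σ ⟨j, hj⟩
  have h3 := congrArg Finset.card h2
  rw [Finset.card_biUnion, Finset.sum_congr rfl h1] at h3
  · rw [Finset.sum_const, Finset.card_univ, Fintype.card_perm, Fintype.card_fin] at h3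
    rw [h3, smul_eq_mul, mul_comm]
  · intro u hu v hv huv
    rw [Function.onFun, Finset.disjoint_left]
    intro σ hσ hσ'
    simp only [Finset.mem_filter, Finset.mem_univ, true_and] at hσ hσ'
    exact huv (σ.injective (le_antisymm (hσ' u hu) (hσ v hv)))

lemma perm_integral {k : ℕ} (f : Fin k → ℝ) (j : Fin k) :
    ((Nat.factorial k : ℝ))⁻¹ * ∑ σ : Equiv.Perm (Fin k),
      ∏ i ∈ Finset.univ.filter (fun i => σ i < σ j), (1 - f i)
    = ∫ t in (0:ℝ)..1, ∏ i ∈ Finset.univ.erase j, (1 - t * f i) := by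
  have hk : (k.factorial : ℝ) ≠ 0 := by exact_mod_cast k.factorial_ne_zero
  have hL : ∀ σ : Equiv.Perm (Fin k),
      ∏ i ∈ Finset.univ.filter (fun i => σ i < σ j), (1 - f i) =
      ∑ T ∈ (Finset.univ.erase j).powerset,
        if (∀ i ∈ insert j T, σ i ≤ σ j) then ∏ i ∈ T, (- f i) else 0 := by
    intro σ
    simp only [sub_eq_add_neg]
    rw [Finset.prod_one_add, ← Finset.sum_filter]
    apply Finset.sum_congr _ (fun _ _ => rfl)
    ext T
    simp only [Finset.mem_powerset, Finset.mem_filter, Finset.subset_iff, Finset.mem_univ, true_and,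
      Finset.mem_erase, Finset.mem_insert, and_true]
    constructor
    · intro h
      refine ⟨fun i hi hij => ?_, ?_⟩
      · have := h hi
        rw [hij] at this
        exact lt_irrefl _ this
      · rintro i (rfl | hi)
        · exact le_rfl
        · exact (h hi).le
    · rintro ⟨h, h'⟩ i hi
      exact lt_of_le_of_ne (h' i (Or.inr hi)) (fun e => h hi (σ.injective e))
  have hR : ∀ t : ℝ, ∏ i ∈ Finset.univ.erase j, (1 - t * f i) =
      ∑ T ∈ (Finset.univ.erase j).powerset, (∏ i ∈ T, (- f i)) * t ^ T.card := by
    intro t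
    simp only [sub_eq_add_neg]
    rw [Finset.prod_one_add]
    apply Finset.sum_congr rfl
    intro T _
    rw [mul_comm, ← Finset.prod_const, ← Finset.prod_mul_distrib]
    apply Finset.prod_congr rfl
    intros
    ring
  simp only [hL, hR]
  rw [Finset.sum_comm, intervalIntegral.integral_finsetSum, Finset.mul_sum]
  · apply Finset.sum_congr rfl
    intro T hT
    have hjT : j ∉ T := fun h => by
      have := (Finset.mem_powerset.1 hT) h
      simp at this
    have hc := perm_count (insert j T) j (Finset.mem_insert_self _ _)
    rw [Finset.card_insert_of_notMem hjT] at hc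
    have hc' := congrArg (Nat.cast : ℕ → ℝ) hc
    rw [← Finset.sum_filter, Finset.sum_const, nsmul_eq_mul,
      intervalIntegral.integral_const_mul, integral_pow]
    rw [← hc'] at hk ⊢
    push_cast at hk ⊢
    have h1 := left_ne_zero_of_mul hk
    have h2 := right_ne_zero_of_mul hk
    field_simp
    simp
  · intro T _
    apply Continuous.intervalIntegrable
    fun_prop

lemma integral_limit (a b : ℝ) (ha : a ≠ 0) :
    ∫ t in (0:ℝ)..1, (1 - t * b) * Real.exp (-(t * a)) =
      (1 - Real.exp (-a)) / a - b * ((1 - (1 + a) * Real.exp (-a)) / a ^ 2) := by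
  have hd : ∀ t ∈ Set.uIcc (0:ℝ) 1, HasDerivAt
      (fun t : ℝ => (b * (a * t + 1) / a ^ 2 - 1 / a) * Real.exp (-(t * a)))
      ((1 - t * b) * Real.exp (-(t * a))) t := by
    intro t _
    have e1 : HasDerivAt (fun t : ℝ => Real.exp (-(t * a))) (Real.exp (-(t * a)) * (-(1 * a))) t :=
      (((hasDerivAt_id t).mul_const a).neg).exp
    have e2 : HasDerivAt (fun t : ℝ => b * (a * t + 1) / a ^ 2 - 1 / a)
        (b * (a * 1) / a ^ 2) t :=
      ((((((hasDerivAt_id t).const_mul a).add_const 1).const_mul b).div_const _).sub_const _)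
    refine (e2.mul e1).congr_deriv ?_
    field_simp
    ring
  rw [intervalIntegral.integral_eq_sub_of_hasDerivAt hd]
  · simp
    field_simp
    ring
  · apply Continuous.intervalIntegrable
    fun_prop

lemma Fcdf_mem (z : ℝ) (hz : 0 ≤ z) : 0 ≤ Fcdf z ∧ Fcdf z ≤ 1 :=
  ⟨le_min (by positivity) zero_le_one, min_le_right _ _⟩

lemma lim_part (s b : ℝ) (hs : 0 < s) (hb : 0 ≤ b) (hb' : b ≤ 1) :
    Filter.Tendsto (fun n : ℕ => ∫ t in (0:ℝ)..1, (1 - t * b) *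
      (1 - t * Fcdf (s / (((n + 3 : ℕ) : ℝ) - 2))) ^ (n + 1)) Filter.atTop
      (nhds ((1 - Real.exp (-((11 / 6) * s))) / ((11 / 6) * s) -
        b * ((1 - (1 + (11 / 6) * s) * Real.exp (-((11 / 6) * s))) / ((11 / 6) * s) ^ 2))) := by
  rw [← integral_limit _ b (by positivity)]
  have hq : ∀ n : ℕ, (((n + 3 : ℕ) : ℝ) - 2) = ((n + 1 : ℕ) : ℝ) := by
    intro n; push_cast; ring
  simp only [hq]
  apply intervalIntegral.tendsto_integral_filter_of_dominated_convergence (fun _ => 1)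
  · refine Filter.Eventually.of_forall fun n => ?_
    apply Continuous.aestronglyMeasurable
    fun_prop
  · refine Filter.Eventually.of_forall fun n => Filter.Eventually.of_forall fun t ht => ?_
    rw [Set.uIoc_of_le zero_le_one] at ht
    obtain ⟨ht0, ht1⟩ := ht
    obtain ⟨hF0, hF1⟩ := Fcdf_mem (s / ((n + 1 : ℕ) : ℝ)) (by positivity)
    have key : ∀ c : ℝ, 0 ≤ c → c ≤ 1 → |1 - t * c| ≤ 1 := by
      intro c h0 h1
      have := mul_nonneg ht0.le h0
      have := mul_le_one₀ ht1 h0 h1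
      rw [abs_le]; constructor <;> linarith
    rw [norm_mul, norm_pow, Real.norm_eq_abs, Real.norm_eq_abs]
    exact mul_le_one₀ (key b hb hb') (by positivity) (pow_le_one₀ (abs_nonneg _) (key _ hF0 hF1))
  · exact intervalIntegrable_const
  · refine Filter.Eventually.of_forall fun t _ => ?_
    apply Filter.Tendsto.const_mul
    have h := (Real.tendsto_one_add_div_pow_exp (-(t * ((11 / 6) * s)))).comp
      (Filter.tendsto_add_atTop_nat 1)
    refine h.congr' ?_
    have hev : ∀ᶠ n : ℕ in Filter.atTop, (11 / 6) * s ≤ (n : ℝ) :=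
      (tendsto_natCast_atTop_atTop (R := ℝ)).eventually_ge_atTop _
    filter_upwards [hev] with n hn
    have hp : (0:ℝ) < ((n + 1 : ℕ) : ℝ) := by positivity
    have : Fcdf (s / ((n + 1 : ℕ) : ℝ)) = (11 / 6) * (s / ((n + 1 : ℕ) : ℝ)) := by
      apply min_eq_left
      rw [← mul_div_assoc, div_le_one hp]
      push_cast; linarith
    simp only [Function.comp, this]
    congr 1
    ring

lemma prod_erase_eq {k : ℕ} (j : Fin k) (g : Fin k → ℝ) :
    ∏ i ∈ Finset.univ.erase j, g i = ∏ i, if i = j then 1 else g i := by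
  rw [← Finset.mul_prod_erase Finset.univ _ (Finset.mem_univ j)]
  simp only [if_true, one_mul]
  apply Finset.prod_congr rfl
  intro i hi
  rw [if_neg (Finset.ne_of_mem_erase hi)]

lemma Cdensity_eq (n : ℕ) (hn : 3 ≤ n + 3) (x1 x2 : ℝ) :
    Cdensity (n + 3) hn x1 x2 =
    Fpdf x1 * (∫ t in (0:ℝ)..1, (1 - t * Fcdf x2) *
      (1 - t * Fcdf ((1 - x1 - x2) / (((n + 3 : ℕ) : ℝ) - 2))) ^ (n + 1)) +
    Fpdf x2 * (∫ t in (0:ℝ)..1, (1 - t * Fcdf x1) *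
      (1 - t * Fcdf ((1 - x1 - x2) / (((n + 3 : ℕ) : ℝ) - 2))) ^ (n + 1)) := by
  unfold Cdensity dDensity
  rw [Finset.sum_add_distrib, ← Finset.mul_sum, ← Finset.mul_sum, mul_add, mul_left_comm,
    mul_left_comm _ (Fpdf _)]
  generalize (1 - x1 - x2) / (((n + 3 : ℕ) : ℝ) - 2) = c
  have P := fun j => perm_integral (fun i : Fin (n + 3) => Fcdf (if (i : ℕ) = 0 then x1 else
    if (i : ℕ) = 1 then x2 else c)) j
  rw [P, P]
  have S : ∀ g : Fin (n + 3) → ℝ, ∏ i, g i = g 0 * (g 1 * ∏ i : Fin (n + 1), g i.succ.succ) := by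
    intro g
    rw [Fin.prod_univ_succ, Fin.prod_univ_succ]
    rfl
  have e10 : (1 : Fin (n + 3)) ≠ 0 := by simp
  have v0 : ((0 : Fin (n + 3)) : ℕ) = 0 := rfl
  have v1 : ((1 : Fin (n + 3)) : ℕ) = 1 := rfl
  have z0 : (⟨0, by omega⟩ : Fin (n + 3)) = 0 := rfl
  have z1 : (⟨1, by omega⟩ : Fin (n + 3)) = 1 := rfl
  have es0 : ∀ i : Fin (n + 1), i.succ.succ ≠ (0 : Fin (n + 3)) := fun i h => by
    have := congrArg Fin.val h
    rw [Fin.val_succ, v0] at this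
    omega
  have es1 : ∀ i : Fin (n + 1), i.succ.succ ≠ (1 : Fin (n + 3)) := fun i h => by
    have := congrArg Fin.val h
    rw [Fin.val_succ, Fin.val_succ, v1] at this
    omega
  have w0 : ∀ i : Fin (n + 1), ¬ ((i.succ.succ : Fin (n + 3)) : ℕ) = 0 := fun i => by
    rw [Fin.val_succ]; omega
  have w1 : ∀ i : Fin (n + 1), ¬ ((i.succ.succ : Fin (n + 3)) : ℕ) = 1 := fun i => by
    rw [Fin.val_succ, Fin.val_succ]; omega
  simp only [prod_erase_eq, S, z0, z1, if_neg e10, if_neg e10.symm, v0, v1, if_true,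
    if_neg one_ne_zero, if_neg (es0 _), if_neg (es1 _), if_neg (w0 _), if_neg (w1 _), one_mul,
    Finset.prod_const, Finset.card_univ, Fintype.card_fin]

/-- for `x_1, x_2 ≥ 0` with `x_1 + x_2 < 1` and `a = (11/6)(1 − x_1 − x_2)`,
`C_k(x_1, x_2)` converges as `k → ∞` to
`(F′(x_1) + F′(x_2))·(1 − e^{−a})/a − (F′(x_1)F(x_2) + F′(x_2)F(x_1))·(1 − (1+a)e^{−a})/a²`. -/
theorem Cdensity_tendsto (x1 x2 : ℝ) (h1 : 0 ≤ x1) (h2 : 0 ≤ x2) (h12 : x1 + x2 < 1) :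
    Filter.Tendsto (fun n : ℕ => Cdensity (n + 3) (by omega) x1 x2) Filter.atTop
      (nhds ((Fpdf x1 + Fpdf x2) *
          ((1 - Real.exp (-((11 / 6) * (1 - x1 - x2)))) / ((11 / 6) * (1 - x1 - x2))) -
        (Fpdf x1 * Fcdf x2 + Fpdf x2 * Fcdf x1) *
          ((1 - (1 + (11 / 6) * (1 - x1 - x2)) * Real.exp (-((11 / 6) * (1 - x1 - x2)))) /
            ((11 / 6) * (1 - x1 - x2)) ^ 2))) := by
  have hs : 0 < 1 - x1 - x2 := by linarith
  obtain ⟨a1, b1⟩ := Fcdf_mem x1 h1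
  obtain ⟨a2, b2⟩ := Fcdf_mem x2 h2
  have H := ((lim_part (1 - x1 - x2) (Fcdf x2) hs a2 b2).const_mul (Fpdf x1)).add
    ((lim_part (1 - x1 - x2) (Fcdf x1) hs a1 b1).const_mul (Fpdf x2))
  simp only [Cdensity_eq]
  convert H using 2
  ring
end

section
/- For every real a with 0 < a ≤ 11/6, (11/6)·(1 − e^{−a})/a − (11/6)·(1 − (1 + a)·e^{−a})/a² ≤ 11/12. -/
/-- for `0 < a ≤ 11/6`,
`(11/6)(1 − e^{−a})/a − (11/6)(1 − (1+a)e^{−a})/a² ≤ 11/12`. -/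
theorem Cinfty_case2_bound (a : ℝ) (h0 : 0 < a) (h1 : a ≤ 11 / 6) :
    (11 / 6) * (1 - Real.exp (-a)) / a -
      (11 / 6) * (1 - (1 + a) * Real.exp (-a)) / a ^ 2 ≤ 11 / 12 := by
  have hq := Real.quadratic_le_exp_of_nonneg h0.le
  have hE : Real.exp (-a) ≤ 1 - a + a ^ 2 / 2 := by
    have hp : 0 < 1 - a + a ^ 2 / 2 := by nlinarith [sq_nonneg (a - 1)]
    rw [Real.exp_neg, inv_le_iff_one_le_mul₀ (Real.exp_pos a)]
    have h2 := mul_le_mul_of_nonneg_left hq hp.le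
    nlinarith [sq_nonneg (a ^ 2)]
  have h3 : (11 / 6) * (1 - Real.exp (-a)) / a -
      (11 / 6) * (1 - (1 + a) * Real.exp (-a)) / a ^ 2
      = (11 / 6) * (a - 1 + Real.exp (-a)) / a ^ 2 := by
    field_simp
    ring
  rw [h3, div_le_iff₀ (by positivity)]
  linarith
end

section
/- The function C : (0, 11/6) → ℝ defined by C(a) = (11/3)·(1 − e^{−a})/a − (121/36)·(1 − (6/11)·a)·(1 − (1 + a)·e^{−a})/a² is strictly concave on the open interval (0, 11/6). -/
theorem Cfun_aux1 (x : ℝ) (hx : 0 < x) :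
    HasDerivAt (fun a : ℝ =>
        (11 / 3) * (1 - Real.exp (-a)) / a -
          (121 / 36) * (1 - (6 / 11) * a) * (1 - (1 + a) * Real.exp (-a)) / a ^ 2)
      (11 / 36 * ((-18 * x + 22 + Real.exp (-x) * (6 * x ^ 3 + 7 * x ^ 2 - 4 * x - 22)) / x ^ 3)) x := by
  have hE : HasDerivAt (fun a : ℝ => Real.exp (-a)) (Real.exp (-x) * (-1)) x :=
    (hasDerivAt_neg x).exp
  have hid := hasDerivAt_id' x
  have h1 := ((hE.const_sub 1).const_mul (11 / 3)).fun_div hid hx.ne'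
  have h2 := ((((hid.const_mul (6 / 11)).const_sub 1).const_mul (121 / 36)).fun_mul
    (((hid.const_add 1).fun_mul hE).const_sub 1)).fun_div (hid.fun_pow 2) (pow_ne_zero 2 hx.ne')
  refine (h1.fun_sub h2).congr_deriv ?_
  field_simp
  ring

theorem Cfun_aux2 (x : ℝ) (hx : 0 < x) :
    HasDerivAt (fun x : ℝ =>
      (11 / 36 * ((-18 * x + 22 + Real.exp (-x) * (6 * x ^ 3 + 7 * x ^ 2 - 4 * x - 22)) / x ^ 3)))
      (11 / 36 * ((11 - 6 * x) * (Real.exp (-x) * (6 + 6 * x + 3 * x ^ 2 + x ^ 3) - 6) / x ^ 4)) x := by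
  have hE : HasDerivAt (fun a : ℝ => Real.exp (-a)) (Real.exp (-x) * (-1)) x :=
    (hasDerivAt_neg x).exp
  have hid := hasDerivAt_id' x
  have hp := ((((hid.fun_pow 3).const_mul 6).fun_add ((hid.fun_pow 2).const_mul 7)).fun_sub
    (hid.const_mul 4)).sub_const 22
  have h1 := ((((hid.const_mul (-18)).add_const 22).fun_add (hE.fun_mul hp)).fun_div
    (hid.fun_pow 3) (pow_ne_zero 3 hx.ne')).const_mul (11 / 36)
  refine h1.congr_deriv ?_
  field_simp
  ring

theorem Cfun_aux3 (x : ℝ) (hx : 0 < x) :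
    Real.exp (-x) * (6 + 6 * x + 3 * x ^ 2 + x ^ 3) < 6 := by
  have h := Real.sum_le_exp_of_nonneg hx.le 5
  simp [Finset.sum_range_succ, Nat.factorial] at h
  have h4 : 0 < x ^ 4 := by positivity
  have h5 : 6 + 6 * x + 3 * x ^ 2 + x ^ 3 < 6 * Real.exp x := by linarith
  calc _ < Real.exp (-x) * (6 * Real.exp x) :=
        mul_lt_mul_of_pos_left h5 (Real.exp_pos _)
    _ = 6 := by rw [Real.exp_neg]; field_simp

/-- the function
`C(a) = (11/3)(1 − e^{−a})/a − (121/36)(1 − (6/11)a)(1 − (1+a)e^{−a})/a²`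
is strictly concave on the open interval `(0, 11/6)`. -/
theorem Cfun_strictConcaveOn :
    StrictConcaveOn ℝ (Set.Ioo (0 : ℝ) (11 / 6))
      (fun a : ℝ =>
        (11 / 3) * (1 - Real.exp (-a)) / a -
          (121 / 36) * (1 - (6 / 11) * a) * (1 - (1 + a) * Real.exp (-a)) / a ^ 2) := by
  refine strictConcaveOn_of_deriv2_neg (convex_Ioo _ _)
    (fun x hx => (Cfun_aux1 x hx.1).continuousAt.continuousWithinAt) ?_
  intro x hx
  rw [interior_Ioo] at hx
  have hev := Filter.eventually_of_mem (Ioi_mem_nhds hx.1)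
    (fun y (hy : y ∈ Set.Ioi (0 : ℝ)) => (Cfun_aux1 y hy).deriv)
  have h2 := ((Cfun_aux2 x hx.1).congr_of_eventuallyEq hev).deriv
  rw [Function.iterate_succ, Function.iterate_one, Function.comp_apply, h2]
  have h3 := Cfun_aux3 x hx.1
  have h0 := hx.1
  have h4 : 0 < 11 - 6 * x := by linarith [hx.2]
  have h5 : (11 - 6 * x) * (Real.exp (-x) * (6 + 6 * x + 3 * x ^ 2 + x ^ 3) - 6) < 0 :=
    mul_neg_of_pos_of_neg h4 (by linarith)
  have := div_neg_of_neg_of_pos h5 (pow_pos h0 4)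
  linarith
end

section
/- For every real a with 0 < a < 11/6, the quantity D(a) = −7·e^{−a}·a³ − 3·e^{−a}·a² + 36·a + 30·e^{−a}·a − 6·e^{−a}·a⁴ − 66 + 66·e^{−a} is strictly negative. (Moreover D(0) = 0 and D(11/6) = 0.) -/
/-- the quantity
`D(a) = −7e^{−a}a³ − 3e^{−a}a² + 36a + 30e^{−a}a − 6e^{−a}a⁴ − 66 + 66e^{−a}`
is strictly negative on `(0, 11/6)`, and vanishes at `a = 0` and `a = 11/6`. -/
theorem Dfun_neg :
    (∀ a : ℝ, 0 < a → a < 11 / 6 →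
      -7 * Real.exp (-a) * a ^ 3 - 3 * Real.exp (-a) * a ^ 2 + 36 * a +
        30 * Real.exp (-a) * a - 6 * Real.exp (-a) * a ^ 4 - 66 + 66 * Real.exp (-a) < 0) ∧
    (-7 * Real.exp (-(0 : ℝ)) * (0 : ℝ) ^ 3 - 3 * Real.exp (-(0 : ℝ)) * (0 : ℝ) ^ 2 +
        36 * (0 : ℝ) + 30 * Real.exp (-(0 : ℝ)) * (0 : ℝ) - 6 * Real.exp (-(0 : ℝ)) * (0 : ℝ) ^ 4 -
        66 + 66 * Real.exp (-(0 : ℝ)) = 0) ∧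
    (-7 * Real.exp (-(11 / 6 : ℝ)) * (11 / 6 : ℝ) ^ 3 - 3 * Real.exp (-(11 / 6 : ℝ)) * (11 / 6 : ℝ) ^ 2 +
        36 * (11 / 6 : ℝ) + 30 * Real.exp (-(11 / 6 : ℝ)) * (11 / 6 : ℝ) -
        6 * Real.exp (-(11 / 6 : ℝ)) * (11 / 6 : ℝ) ^ 4 - 66 + 66 * Real.exp (-(11 / 6 : ℝ)) = 0) := by
  refine ⟨?_, by norm_num, by ring⟩
  intro a h0 h1
  have h := Real.sum_le_exp_of_nonneg h0.le 5
  simp only [Finset.sum_range_succ, Finset.sum_range_zero, Nat.factorial] at h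
  norm_num at h
  have h4 : 0 < a ^ 4 := by positivity
  have hP : 6 + 6 * a + 3 * a ^ 2 + a ^ 3 < 6 * Real.exp a := by linarith
  have hE : Real.exp (-a) * Real.exp a = 1 := by
    rw [← Real.exp_add]; simp
  have hm := mul_lt_mul_of_pos_left hP (Real.exp_pos (-a))
  have hn : 0 < 6 - Real.exp (-a) * (6 + 6 * a + 3 * a ^ 2 + a ^ 3) := by linarith
  have hk : 0 < 11 - 6 * a := by linarith
  have := mul_pos hk hn
  linarith
end

section
/- The function g : (0, 11/6] → ℝ defined by g(a) = (11/6)·[(1 − e^{−a})/a − (1 − (1 + a)·e^{−a})/a²] is nonincreasing on (0, 11/6]; equivalently, for all a, b with 0 < a ≤ b ≤ 11/6 one has g(b) ≤ g(a). -/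
lemma E_nonpos (x : ℝ) (hx : 0 ≤ x) :
    -x - Real.exp (-x) * x + 2 - 2 * Real.exp (-x) ≤ 0 := by
  have hd : ∀ y : ℝ, HasDerivAt (fun x : ℝ => -x - Real.exp (-x) * x + 2 - 2 * Real.exp (-x))
      (-1 + (1 + y) * Real.exp (-y)) y := by
    intro y
    have h1 : HasDerivAt (fun x : ℝ => Real.exp (-x)) (Real.exp (-y) * (-1)) y :=
      (hasDerivAt_neg y).exp
    have := (((hasDerivAt_neg y).sub (h1.mul (hasDerivAt_id y))).add_const 2).sub (h1.const_mul 2)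
    refine this.congr_deriv ?_
    simp only [id]
    ring
  have hanti : Antitone (fun x : ℝ => -x - Real.exp (-x) * x + 2 - 2 * Real.exp (-x)) := by
    apply antitone_of_deriv_nonpos (fun y => (hd y).differentiableAt)
    intro y
    rw [(hd y).deriv]
    have h1 := Real.add_one_le_exp y
    have h2 : Real.exp y * Real.exp (-y) = 1 := by rw [← Real.exp_add]; simp
    nlinarith [Real.exp_pos (-y)]
  have := hanti hx
  simpa using this

lemma F_anti : AntitoneOn (fun x : ℝ => (x - 1 + Real.exp (-x)) / x ^ 2) (Set.Ioi 0) := by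
  have hd : ∀ y : ℝ, 0 < y → HasDerivAt (fun x : ℝ => (x - 1 + Real.exp (-x)) / x ^ 2)
      ((-y - Real.exp (-y) * y + 2 - 2 * Real.exp (-y)) / y ^ 3) y := by
    intro y hy
    have h1 : HasDerivAt (fun x : ℝ => Real.exp (-x)) (Real.exp (-y) * (-1)) y :=
      (hasDerivAt_neg y).exp
    have := (((hasDerivAt_id y).sub_const 1).add h1).div (hasDerivAt_pow 2 y) (by positivity)
    refine this.congr_deriv ?_
    simp only [id, Pi.add_apply]
    field_simp
    push_cast
    ring
  apply antitoneOn_of_deriv_nonpos (convex_Ioi 0)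
  · intro y hy
    exact (hd y hy).continuousAt.continuousWithinAt
  · intro y hy
    rw [interior_Ioi] at hy
    exact (hd y hy).differentiableAt.differentiableWithinAt
  · intro y hy
    rw [interior_Ioi] at hy
    have hy' : 0 < y := hy
    rw [(hd y hy).deriv]
    exact div_nonpos_of_nonpos_of_nonneg (E_nonpos y hy'.le) (by positivity)

/-- the function
`g(a) = (11/6)·[(1 − e^{−a})/a − (1 − (1+a)e^{−a})/a²]`
is nonincreasing on `(0, 11/6]`: for `0 < a ≤ b ≤ 11/6`, `g(b) ≤ g(a)`. -/
theorem Cinfty_case2_antitone (a b : ℝ) (ha : 0 < a) (hab : a ≤ b) (hb : b ≤ 11 / 6) :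
    (11 / 6) * ((1 - Real.exp (-b)) / b - (1 - (1 + b) * Real.exp (-b)) / b ^ 2) ≤
    (11 / 6) * ((1 - Real.exp (-a)) / a - (1 - (1 + a) * Real.exp (-a)) / a ^ 2) := by
  have key : ∀ x : ℝ, 0 < x → (1 - Real.exp (-x)) / x - (1 - (1 + x) * Real.exp (-x)) / x ^ 2
      = (x - 1 + Real.exp (-x)) / x ^ 2 := by
    intro x hx
    field_simp
    ring
  have hb0 : 0 < b := lt_of_lt_of_le ha hab
  rw [key a ha, key b hb0]
  exact mul_le_mul_of_nonneg_left (F_anti ha hb0 hab) (by norm_num)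
end

section
/- For every real a > 0, the limit as k → ∞ (k ranging over integers ≥ 2) of (1/(k² − k))·∑_{q=0}^{k−2} q·(1 − a/k)^q exists and equals (1 − (1 + a)·e^{−a})/a². -/
theorem aux_sum (r : ℝ) (n : ℕ) :
    (∑ q ∈ Finset.range n, (q : ℝ) * r ^ q) * (1 - r) ^ 2
      = r - n * r ^ n + ((n : ℝ) - 1) * r ^ (n + 1) := by
  induction n with
  | zero => simp
  | succ n ih =>
    rw [Finset.sum_range_succ, add_mul, ih]
    push_cast
    ring

/-- for `a > 0`,
`(1/(k² − k))·∑_{q=0}^{k−2} q·(1 − a/k)^q  →  (1 − (1 + a)e^{−a})/a²` as `k → ∞`. -/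
theorem arithmetico_geometric_sum_tendsto (a : ℝ) (ha : 0 < a) :
    Filter.Tendsto
      (fun k : ℕ => (1 / ((k : ℝ) ^ 2 - (k : ℝ))) *
        ∑ q ∈ Finset.range (k - 1), (q : ℝ) * (1 - a / (k : ℝ)) ^ q)
      Filter.atTop (nhds ((1 - (1 + a) * Real.exp (-a)) / a ^ 2)) := by
  have hd : ∀ c : ℝ, Filter.Tendsto (fun k : ℕ => c / (k : ℝ)) Filter.atTop (nhds 0) :=
    fun c => tendsto_const_div_atTop_nhds_zero_nat c
  have hE : Filter.Tendsto (fun k : ℕ => (1 - a / (k : ℝ)) ^ k) Filter.atTop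
      (nhds (Real.exp (-a))) := by
    refine (Real.tendsto_one_add_div_pow_exp (-a)).congr fun k => ?_
    rw [neg_div, ← sub_eq_add_neg]
  have hr : Filter.Tendsto (fun k : ℕ => 1 - a / (k : ℝ)) Filter.atTop (nhds (1 - 0)) :=
    tendsto_const_nhds.sub (hd a)
  have h1 : Filter.Tendsto (fun k : ℕ => 1 - 1 / (k : ℝ)) Filter.atTop (nhds (1 - 0)) :=
    tendsto_const_nhds.sub (hd 1)
  have h2 : Filter.Tendsto (fun k : ℕ => 1 + a * (1 - 2 / (k : ℝ))) Filter.atTop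
      (nhds (1 + a * (1 - 0))) :=
    tendsto_const_nhds.add (tendsto_const_nhds.mul (tendsto_const_nhds.sub (hd 2)))
  have key := ((hr.sub ((hE.div hr (by norm_num)).mul h2)).div h1 (by norm_num)).div_const (a ^ 2)
  have e : (1 - 0 - Real.exp (-a) / (1 - 0) * (1 + a * (1 - 0))) / (1 - 0) / a ^ 2
      = (1 - (1 + a) * Real.exp (-a)) / a ^ 2 := by
    congr 1; ring
  rw [e] at key
  refine key.congr' ?_
  filter_upwards [Filter.eventually_ge_atTop 2,
    tendsto_natCast_atTop_atTop.eventually (Filter.eventually_gt_atTop a)] with k hk hka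
  obtain ⟨n, rfl⟩ : ∃ n, k = n + 1 := ⟨k - 1, by omega⟩
  have hn : (0 : ℝ) < n := by exact_mod_cast (by omega : 0 < n)
  have hk0 : ((n + 1 : ℕ) : ℝ) ≠ 0 := by positivity
  have hr0 : 1 - a / ((n + 1 : ℕ) : ℝ) ≠ 0 := by
    have : a / ((n + 1 : ℕ) : ℝ) < 1 := (div_lt_one (by positivity)).2 hka
    linarith
  have hs := aux_sum (1 - a / ((n + 1 : ℕ) : ℝ)) n
  simp only [Pi.div_apply, Nat.add_sub_cancel]
  generalize hS : ∑ q ∈ Finset.range n, (q : ℝ) * (1 - a / ((n + 1 : ℕ) : ℝ)) ^ q = S at *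
  generalize hrr : 1 - a / ((n + 1 : ℕ) : ℝ) = r at *
  have har : a = (1 - r) * (n + 1) := by
    rw [← hrr]; push_cast; push_cast at hk0; field_simp; ring
  have h1r : 1 - r ≠ 0 := by
    intro h; rw [h] at har; linarith
  have hS' : S = (r - n * r ^ n + ((n : ℝ) - 1) * r ^ (n + 1)) / (1 - r) ^ 2 := by
    rw [← hs]; field_simp
  rw [hS', har, pow_succ, mul_div_assoc, div_self hr0]
  push_cast
  have hx : (n : ℝ) + 1 ≠ 0 := by positivity
  have hy : 1 - 1 / ((n : ℝ) + 1) = n / (n + 1) := by field_simp; ring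
  have hz : ((n : ℝ) + 1) ^ 2 - (n + 1) = n * (n + 1) := by ring
  rw [hy, hz]
  have hn' := hn.ne'
  field_simp
  ring
end

section
/- Let n ≥ 1, let x ∈ ℝ^n have x_i > 0 for every i, and let S be a nonempty finite set of vectors in ℝ^n with nonnegative coordinates. Define the integrality gap γ = sup { min_{y∈S} ∑_i w_i·y_i : w ∈ ℝ^n, w_i ≥ 0 for all i, ∑_i w_i·x_i = 1 }. Then there exists a probability distribution p on S whose performance ratio max_{1≤i≤n} (∑_{y∈S} p_y·y_i)/x_i equals γ, and every probability distribution p on S satisfies max_{1≤i≤n} (∑_{y∈S} p_y·y_i)/x_i ≥ γ. -/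
theorem weak_dual_aux (n : ℕ) (x : Fin n → ℝ) (hx : ∀ i, 0 < x i)
    (S : Finset (Fin n → ℝ)) (hS : S.Nonempty)
    (p : (Fin n → ℝ) → ℝ) (hp : ∀ y ∈ S, 0 ≤ p y) (hp1 : ∑ y ∈ S, p y = 1)
    (w : Fin n → ℝ) (hw : ∀ i, 0 ≤ w i) (hw1 : ∑ i, w i * x i = 1) (M : ℝ)
    (hM : ∀ i, (∑ y ∈ S, p y * y i) / x i ≤ M) :
    S.inf' hS (fun y => ∑ i, w i * y i) ≤ M := by
  calc S.inf' hS (fun y => ∑ i, w i * y i)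
      = ∑ y ∈ S, p y * S.inf' hS (fun y => ∑ i, w i * y i) := by
        rw [← Finset.sum_mul, hp1, one_mul]
    _ ≤ ∑ y ∈ S, p y * ∑ i, w i * y i := by
        apply Finset.sum_le_sum
        intro y hy
        exact mul_le_mul_of_nonneg_left (Finset.inf'_le _ hy) (hp y hy)
    _ = ∑ i, w i * ∑ y ∈ S, p y * y i := by
        simp_rw [Finset.mul_sum]
        rw [Finset.sum_comm]
        refine Finset.sum_congr rfl fun i _ => Finset.sum_congr rfl fun y _ => by ring
    _ ≤ ∑ i, w i * (M * x i) := by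
        apply Finset.sum_le_sum
        intro i _
        exact mul_le_mul_of_nonneg_left ((div_le_iff₀ (hx i)).1 (hM i)) (hw i)
    _ = M := by
        have : ∀ i, w i * (M * x i) = M * (w i * x i) := fun i => by ring
        simp_rw [this]
        rw [← Finset.mul_sum, hw1, mul_one]

/-- LP duality for the rounding problem. With the integrality gap
`γ = sup { min_{y∈S} w·y : w ≥ 0, w·x = 1 }`, some probability distribution `p` on `S`
has performance ratio `max_i (∑_{y∈S} p_y y_i)/x_i` equal to `γ`, and every probability
distribution on `S` has performance ratio at least `γ`. -/
theorem rounding_duality (n : ℕ) (hn : 0 < n) (x : Fin n → ℝ) (hx : ∀ i, 0 < x i)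
    (S : Finset (Fin n → ℝ)) (hS : S.Nonempty) (hSnn : ∀ y ∈ S, ∀ i, 0 ≤ y i) :
    (∃ p : (Fin n → ℝ) → ℝ, (∀ y ∈ S, 0 ≤ p y) ∧ (∑ y ∈ S, p y = 1) ∧
      Finset.univ.sup' ⟨⟨0, hn⟩, Finset.mem_univ _⟩ (fun i => (∑ y ∈ S, p y * y i) / x i) =
        sSup {r : ℝ | ∃ w : Fin n → ℝ, (∀ i, 0 ≤ w i) ∧ (∑ i, w i * x i = 1) ∧
          r = S.inf' hS (fun y => ∑ i, w i * y i)}) ∧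
    (∀ p : (Fin n → ℝ) → ℝ, (∀ y ∈ S, 0 ≤ p y) → (∑ y ∈ S, p y = 1) →
      sSup {r : ℝ | ∃ w : Fin n → ℝ, (∀ i, 0 ≤ w i) ∧ (∑ i, w i * x i = 1) ∧
          r = S.inf' hS (fun y => ∑ i, w i * y i)} ≤
        Finset.univ.sup' ⟨⟨0, hn⟩, Finset.mem_univ _⟩ (fun i => (∑ y ∈ S, p y * y i) / x i)) := by
  have weak := weak_dual_aux n x hx S hS
  set A : Set ℝ := {r : ℝ | ∃ w : Fin n → ℝ, (∀ i, 0 ≤ w i) ∧ (∑ i, w i * x i = 1) ∧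
          r = S.inf' hS (fun y => ∑ i, w i * y i)} with hA
  have hne : A.Nonempty := by
    refine ⟨_, fun i => if i = ⟨0, hn⟩ then (x i)⁻¹ else 0, ?_, ?_, rfl⟩
    · intro i
      dsimp only
      split_ifs
      · exact (inv_pos.2 (hx i)).le
      · exact le_rfl
    · simp [(hx _).ne']
  have part2 : ∀ p : (Fin n → ℝ) → ℝ, (∀ y ∈ S, 0 ≤ p y) → (∑ y ∈ S, p y = 1) →
      ∀ r ∈ A, r ≤ 
        Finset.univ.sup' ⟨⟨0, hn⟩, Finset.mem_univ _⟩
          (fun i => (∑ y ∈ S, p y * y i) / x i) := by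
    rintro p hp hp1 r ⟨w, hw, hw1, rfl⟩
    exact weak p hp hp1 w hw hw1 _ fun i =>
      Finset.le_sup' (fun i => (∑ y ∈ S, p y * y i) / x i) (Finset.mem_univ i)
  have part2' : ∀ p : (Fin n → ℝ) → ℝ, (∀ y ∈ S, 0 ≤ p y) → (∑ y ∈ S, p y = 1) →
      sSup A ≤ 
        Finset.univ.sup' ⟨⟨0, hn⟩, Finset.mem_univ _⟩
          (fun i => (∑ y ∈ S, p y * y i) / x i) := 
    fun p hp hp1 => csSup_le hne (part2 p hp hp1)
  refine ⟨?_, part2'⟩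
  have hbdd : BddAbove A := by
    obtain ⟨y0, hy0⟩ := hS
    refine ⟨_, fun r hr => part2 (fun y => if y = y0 then 1 else 0) ?_ ?_ r hr⟩
    · intro y _
      split_ifs <;> norm_num
    · simp [hy0]
  set γ := sSup A with hγ
  have key : ∃ z ∈ convexHull ℝ (S : Set (Fin n → ℝ)), ∀ i, z i ≤ γ * x i := by
    by_contra! hcon
    have hTconv : Convex ℝ (Set.Iic (fun i => γ * x i)) := convex_Iic _
    obtain ⟨f, u, v, hf1, huv, hf2⟩ := geometric_hahn_banach_closed_compact hTconv isClosed_Iic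
      (convex_convexHull ℝ (S : Set (Fin n → ℝ)))
      (S.finite_toSet.isCompact_convexHull ℝ) (by
        rw [Set.disjoint_left]
        intro z hz hz2
        obtain ⟨i, hi⟩ := hcon z hz2
        exact absurd (hz i) (not_le.2 hi))
    set c : Fin n → ℝ := fun i => f (Pi.single i 1) with hc
    have hfc : ∀ z, f z = ∑ i, c i * z i := by
      intro z
      conv_lhs => rw [pi_eq_sum_univ' z]
      rw [map_sum]
      refine Finset.sum_congr rfl fun i _ => ?_
      rw [map_smul, smul_eq_mul, mul_comm]
    have hfg := hf1 (fun i => γ * x i) (Set.mem_Iic.2 le_rfl)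
    have hc0 : ∀ i, 0 ≤ c i := by
      intro i
      by_contra! hi
      set t := (u - f (fun i => γ * x i)) / (- c i) with ht
      have ht0 : 0 ≤ t := div_nonneg (by linarith) (by linarith)
      have := hf1 ((fun i => γ * x i) - t • Pi.single i 1) (by
        rw [Set.mem_Iic]
        apply sub_le_self
        apply smul_nonneg ht0
        rw [Pi.single_nonneg]
        exact zero_le_one)
      rw [map_sub, map_smul, smul_eq_mul] at this
      have h2 : t * (- c i) = u - f (fun i => γ * x i) := by
        rw [ht]; exact div_mul_cancel₀ _ (by linarith)
      have h3 : f (Pi.single i 1) = c i := rfl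
      rw [h3] at this
      linarith
    have hSv : ∀ y ∈ S, v < ∑ i, c i * y i := by
      intro y hy
      rw [← hfc]
      exact hf2 y (subset_convexHull ℝ _ hy)
    have hgx : γ * ∑ i, c i * x i < u := by
      rw [hfc] at hfg
      rw [Finset.mul_sum]
      convert hfg using 2 with i
      ring
    have hD : 0 < ∑ i, c i * x i := by
      have h0 : ∀ i ∈ Finset.univ, 0 ≤ c i * x i := fun i _ => mul_nonneg (hc0 i) (hx i).le
      refine lt_of_le_of_ne (Finset.sum_nonneg h0) fun h => ?_
      have hz := (Finset.sum_eq_zero_iff_of_nonneg h0).1 h.symm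
      have hcz : ∀ i, c i = 0 := fun i =>
        (mul_eq_zero.1 (hz i (Finset.mem_univ i))).resolve_right (hx i).ne'
      obtain ⟨y0, hy0⟩ := hS
      have h1 := hSv y0 hy0
      simp only [hcz, zero_mul, Finset.sum_const_zero, mul_zero] at h1 hgx
      linarith
    set D := ∑ i, c i * x i with hDdef
    have hmem : S.inf' hS (fun y => ∑ i, (c i / D) * y i) ∈ A := by
      refine ⟨fun i => c i / D, fun i => div_nonneg (hc0 i) hD.le, ?_, rfl⟩
      simp_rw [div_mul_eq_mul_div]
      rw [← Finset.sum_div]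
      exact div_self hD.ne'
    have hle : S.inf' hS (fun y => ∑ i, (c i / D) * y i) ≤ γ := le_csSup hbdd hmem
    obtain ⟨y, hy, hyle⟩ := (Finset.inf'_le_iff hS).1 hle
    simp_rw [div_mul_eq_mul_div] at hyle
    rw [← Finset.sum_div, div_le_iff₀ hD] at hyle
    have := hSv y hy
    linarith
  obtain ⟨z, hz, hzle⟩ := key
  rw [Finset.mem_convexHull'] at hz
  obtain ⟨p, hp, hp1, rfl⟩ := hz
  refine ⟨p, hp, hp1, le_antisymm ?_ (part2' p hp hp1)⟩
  apply Finset.sup'_le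
  intro i _
  rw [div_le_iff₀ (hx i)]
  simpa [Finset.sum_apply] using hzle i
end
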